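/- Suppose X and Y are c-quasiconvex and complete metric spaces, G ⊊ X and G′ ⊊ Y are domains, and both f : G → G′ and f⁻¹ : G′ → G are weakly H-quasisymmetric. Then f is fully (M,C)-coarsely quasihyperbolic, i.e., there exist constants M = M(c,H) ≥ 1 and C = C(c,H) ≥ 0 such that for every subdomain D ⊂ G, (k_D(x,y) − C)/M ≤ k_{f(D)}(f(x), f(y)) ≤ M·k_D(x,y) + C for all x, y ∈ D. -/

import Mathlib

open Metric Set Filter

section QHDefs

variable {X : Type*} [MetricSpace X] {Y : Type*} [MetricSpace Y]

/-- Distance to the boundary of `G`. -/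
noncomputable def bdist (G : Set X) (z : X) : ℝ := Metric.infDist z (frontier G)

/-- A unit-speed (1-Lipschitz, arclength-parametrized) rectifiable curve in `G`
from `x` to `y`, parametrized on `[0, L]`, where `L` is its length. -/
structure CurveIn (G : Set X) (γ : ℝ → X) (L : ℝ) (x y : X) : Prop where
  nonneg : 0 ≤ L
  lip : LipschitzOnWith 1 γ (Set.Icc 0 L)
  source : γ 0 = x
  target : γ L = y
  mem : ∀ t ∈ Set.Icc 0 L, γ t ∈ G

/-- Quasihyperbolic length of the subcurve `γ|[s,t]` in `G`: `∫_γ |dz|/δ_G(z)`. -/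
noncomputable def qhLengthOn (G : Set X) (γ : ℝ → X) (s t : ℝ) : ℝ :=
  ∫ u in s..t, 1 / bdist G (γ u)

/-- Quasihyperbolic length of a curve parametrized on `[0,L]`. -/
noncomputable def qhLength (G : Set X) (γ : ℝ → X) (L : ℝ) : ℝ := qhLengthOn G γ 0 L

/-- Quasihyperbolic distance in `G`. -/
noncomputable def qhDist (G : Set X) (x y : X) : ℝ :=
  sInf {l | ∃ γ L, CurveIn G γ L x y ∧ qhLength G γ L = l}

/-- `X` is a `c`-quasiconvex metric space. -/
def QCSpace (c : ℝ) (X : Type*) [MetricSpace X] : Prop :=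
  ∀ x y : X, ∃ γ L, CurveIn (Set.univ : Set X) γ L x y ∧ L ≤ c * dist x y

/-- A set `G` is `c`-quasiconvex. -/
def QCSet (c : ℝ) (G : Set X) : Prop :=
  ∀ x ∈ G, ∀ y ∈ G, ∃ γ L, CurveIn G γ L x y ∧ L ≤ c * dist x y

/-- A domain: a nonempty connected open set. -/
def IsDomainSet (G : Set X) : Prop := IsOpen G ∧ IsConnected G

/-- A proper domain: a nonempty connected open set, different from the whole space. -/
def IsProperDomain (G : Set X) : Prop := IsOpen G ∧ IsConnected G ∧ G ≠ Set.univ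

/-- `G` is an `a`-John domain: each pair of points is joined by a rectifiable arc
satisfying the cone condition. -/
def IsJohn (a : ℝ) (G : Set X) : Prop :=
  ∀ x ∈ G, ∀ y ∈ G, ∃ γ L, CurveIn G γ L x y ∧
    ∀ t ∈ Set.Icc 0 L, min t (L - t) ≤ a * bdist G (γ t)

/-- `G` is a `b`-uniform domain: each pair of points is joined by a double `b`-cone arc. -/
def IsUniform (b : ℝ) (G : Set X) : Prop :=
  ∀ x ∈ G, ∀ y ∈ G, ∃ γ L, CurveIn G γ L x y ∧ L ≤ b * dist x y ∧
    ∀ t ∈ Set.Icc 0 L, min t (L - t) ≤ b * bdist G (γ t)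

/-- `G` is a locally `a`-John domain. -/
def LocallyJohn (a : ℝ) (G : Set X) : Prop :=
  ∀ x ∈ G, ∀ r : ℝ, 0 < r → r ≤ bdist G x → IsJohn a (Metric.ball x r)

/-- The `h`-coarse quasihyperbolic length of the subcurve `γ|[s,t]` in `G`:
the supremum of sums `Σ k_G(x_{j-1},x_j)` over `h`-coarse sequences of successive
points of the arc (with the convention that it is `0` if there are none). -/
noncomputable def coarseQHLength (G : Set X) (γ : ℝ → X) (s t h : ℝ) : ℝ :=
  sSup {S | ∃ n : ℕ, 0 < n ∧ ∃ u : ℕ → ℝ,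
    (∀ i < n, u i ≤ u (i + 1)) ∧ (∀ i ≤ n, u i ∈ Set.Icc s t) ∧
    (∀ i < n, h ≤ qhDist G (γ (u i)) (γ (u (i + 1)))) ∧
    S = ∑ i ∈ Finset.range n, qhDist G (γ (u i)) (γ (u (i + 1)))}

/-- `γ` (parametrized on `[0,L]`) is a `(ν,h)`-solid arc in `G`. -/
def SolidArc (G : Set X) (γ : ℝ → X) (L ν h : ℝ) : Prop :=
  ∀ s t : ℝ, 0 ≤ s → s ≤ t → t ≤ L →
    coarseQHLength G γ s t h ≤ ν * qhDist G (γ s) (γ t)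

/-- `γ` (parametrized on `[0,L]`) is an `ε`-short arc in `G`. -/
def ShortArc (G : Set X) (γ : ℝ → X) (L ε : ℝ) : Prop :=
  qhLength G γ L ≤ qhDist G (γ 0) (γ L) + ε

/-- A map is weakly `H`-quasisymmetric. -/
def WeakQS (H : ℝ) (f : X → Y) : Prop :=
  ∀ x a b : X, dist x a ≤ dist x b → dist (f x) (f a) ≤ H * dist (f x) (f b)

/-- Image of a subset `D ⊆ G` under a homeomorphism `f : G ≃ₜ G'`, as a subset of `Y`. -/
def imSet {G : Set X} {G' : Set Y} (f : ↥G ≃ₜ ↥G') (D : Set X) : Set Y :=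
  Subtype.val '' (f '' (Subtype.val ⁻¹' D))

/-- `f : G ≃ₜ G'` is `M`-quasihyperbolic. -/
def MQH (M : ℝ) {G : Set X} {G' : Set Y} (f : ↥G ≃ₜ ↥G') : Prop :=
  ∀ x y : ↥G, (1 / M) * qhDist G ↑x ↑y ≤ qhDist G' ↑(f x) ↑(f y) ∧
    qhDist G' ↑(f x) ↑(f y) ≤ M * qhDist G ↑x ↑y

/-- `f : G ≃ₜ G'` is `C`-coarsely `M`-quasihyperbolic. -/
def CQH (M C : ℝ) {G : Set X} {G' : Set Y} (f : ↥G ≃ₜ ↥G') : Prop :=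
  ∀ x y : ↥G, (qhDist G ↑x ↑y - C) / M ≤ qhDist G' ↑(f x) ↑(f y) ∧
    qhDist G' ↑(f x) ↑(f y) ≤ M * qhDist G ↑x ↑y + C

/-- `f : G ≃ₜ G'` is freely `φ`-quasiconformal: in every subdomain, the
quasihyperbolic distances of `f` and `f⁻¹` are controlled by `φ`. -/
def FQC (φ : ℝ → ℝ) {G : Set X} {G' : Set Y} (f : ↥G ≃ₜ ↥G') : Prop :=
  ∀ D : Set X, ∀ hD : D ⊆ G, IsDomainSet D →
    ∀ x : X, ∀ hx : x ∈ D, ∀ y : X, ∀ hy : y ∈ D,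
      qhDist (imSet f D) ↑(f ⟨x, hD hx⟩) ↑(f ⟨y, hD hy⟩) ≤ φ (qhDist D x y) ∧
      qhDist D x y ≤ φ (qhDist (imSet f D) ↑(f ⟨x, hD hx⟩) ↑(f ⟨y, hD hy⟩))

end QHDefs

section Curves

variable {X : Type*} [MetricSpace X] {D : Set X} {γ : ℝ → X} {L c : ℝ} {x y z : X}

theorem CurveIn.dist_le (h : CurveIn D γ L x y) {s t : ℝ} (hs : 0 ≤ s) (hst : s ≤ t)
    (ht : t ≤ L) : dist (γ s) (γ t) ≤ t - s := by
  have := h.lip.dist_le_mul s ⟨hs, hst.trans ht⟩ t ⟨hs.trans hst, ht⟩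
  rwa [NNReal.coe_one, one_mul, dist_comm s t, Real.dist_eq, abs_of_nonneg (sub_nonneg.2 hst)]
    at this

theorem CurveIn.dist_left_le (h : CurveIn D γ L x y) {t : ℝ} (ht : t ∈ Icc 0 L) :
    dist x (γ t) ≤ t := by
  simpa [h.source] using h.dist_le le_rfl ht.1 ht.2

theorem CurveIn.restrict (h : CurveIn D γ L x y) {E : Set X} {s t : ℝ} (hs : 0 ≤ s) (hst : s ≤ t)
    (ht : t ≤ L) (hE : ∀ u ∈ Icc s t, γ u ∈ E) :
    CurveIn E (fun u => γ (u + s)) (t - s) (γ s) (γ t) where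
  nonneg := sub_nonneg.2 hst
  lip := by
    refine LipschitzOnWith.of_dist_le_mul fun a ha b hb => ?_
    have := h.lip.dist_le_mul (a + s) ⟨by linarith [ha.1], by linarith [ha.2]⟩ (b + s)
      ⟨by linarith [hb.1], by linarith [hb.2]⟩
    rwa [dist_add_right] at this
  source := by simp
  target := by simp
  mem u hu := hE _ ⟨by linarith [hu.1], by linarith [hu.2]⟩

/-- Concatenation of two curves. -/
theorem CurveIn.append {γ' : ℝ → X} {L' : ℝ} (h : CurveIn D γ L x y) (h' : CurveIn D γ' L' y z) :
    CurveIn D (fun t => if t ≤ L then γ t else γ' (t - L)) (L + L') x z where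
  nonneg := add_nonneg h.nonneg h'.nonneg
  lip := by
    have key : ∀ a ∈ Icc 0 (L + L'), ∀ b ∈ Icc 0 (L + L'), a ≤ b →
        dist (if a ≤ L then γ a else γ' (a - L)) (if b ≤ L then γ b else γ' (b - L)) ≤ b - a := by
      intro a ha b hb hab
      split_ifs with h1 h2 h2
      · exact h.dist_le ha.1 hab h2
      · have e1 := h.dist_le ha.1 h1 le_rfl
        have e2 := h'.dist_left_le (t := b - L) ⟨by linarith, by linarith [hb.2]⟩
        rw [h.target] at e1
        linarith [dist_triangle (γ a) y (γ' (b - L))]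
      · exact absurd (hab.trans h2) h1
      · have := h'.dist_le (s := a - L) (t := b - L) (by linarith) (by linarith)
          (by linarith [hb.2])
        linarith
    refine LipschitzOnWith.of_dist_le_mul fun a ha b hb => ?_
    rw [NNReal.coe_one, one_mul]
    rcases le_total a b with hab | hab
    · exact (key a ha b hb hab).trans ((le_abs_self _).trans (by rw [dist_comm, Real.dist_eq]))
    · rw [dist_comm]
      exact (key b hb a ha hab).trans ((le_abs_self _).trans (by rw [Real.dist_eq]))
  source := by simp [h.nonneg, h.source]
  target := by
    by_cases h0 : L' ≤ 0
    · have h1 : L' = 0 := le_antisymm h0 h'.nonneg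
      have h2 := h'.source
      have h3 := h'.target
      subst h1
      simp [h.target, ← h2, ← h3]
    · simp [h0, h'.target]
  mem t ht := by
    split_ifs with h1
    · exact h.mem t ⟨ht.1, h1⟩
    · exact h'.mem _ ⟨by linarith, by linarith [ht.2]⟩

/-- A curve that leaves an open set has a first exit time. -/
theorem CurveIn.exists_first_exit {E : Set X} (h : CurveIn E γ L x y) (hD : IsOpen D) (hx : x ∈ D)
    {t : ℝ} (ht : t ∈ Icc 0 L) (htD : γ t ∉ D) :
    ∃ τ, 0 < τ ∧ τ ≤ t ∧ γ τ ∉ D ∧ ∀ s ∈ Ico 0 τ, γ s ∈ D := by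
  set S := Icc 0 L ∩ γ ⁻¹' Dᶜ
  have hS : IsClosed S := h.lip.continuousOn.preimage_isClosed_of_isClosed isClosed_Icc
    hD.isClosed_compl
  have hbdd : BddBelow S := ⟨0, fun u hu => hu.1.1⟩
  have htS : t ∈ S := ⟨ht, htD⟩
  have hmem : sInf S ∈ S := hS.csInf_mem ⟨t, htS⟩ hbdd
  refine ⟨sInf S, lt_of_le_of_ne hmem.1.1 fun h0 => hmem.2 ?_, csInf_le hbdd htS, hmem.2,
    fun s hs => ?_⟩
  · rwa [← h0, h.source]
  · by_contra hsD
    exact absurd (csInf_le hbdd ⟨⟨hs.1, hs.2.le.trans hmem.1.2⟩, hsD⟩) (not_le.2 hs.2)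

/-- A curve that is shorter than the distance from its initial point to the boundary does not
leave the set. -/
theorem CurveIn.mem_of_lt_bdist {E : Set X} (h : CurveIn E γ L x y) (hD : IsOpen D) (hx : x ∈ D)
    (hL : L < bdist D x) : CurveIn D γ L x y where
  nonneg := h.nonneg
  lip := h.lip
  source := h.source
  target := h.target
  mem t ht := by
    by_contra htD
    obtain ⟨τ, h0, hτt, hτ, hlt⟩ := h.exists_first_exit hD hx ht htD
    have hτL := hτt.trans ht.2
    have hfr : γ τ ∈ frontier D := by
      rw [hD.frontier_eq]
      refine ⟨?_, hτ⟩
      have hc : ContinuousWithinAt γ (Ico 0 τ) τ :=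
        (h.lip.continuousOn τ ⟨h0.le, hτL⟩).mono fun u hu => ⟨hu.1, hu.2.le.trans hτL⟩
      refine hc.mem_closure ?_ hlt
      rw [closure_Ico h0.ne]
      exact ⟨h0.le, le_rfl⟩
    have h1 := h.dist_left_le ⟨h0.le, hτL⟩
    have h2 : bdist D x ≤ dist x (γ τ) := infDist_le_dist_of_mem hfr
    linarith

theorem QCSpace.preconnectedSpace (h : QCSpace c X) : PreconnectedSpace X := by
  refine ⟨isPreconnected_of_forall_pair fun x _ y _ => ?_⟩
  obtain ⟨γ, L, hγ, -⟩ := h x y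
  exact ⟨γ '' Icc 0 L, subset_univ _, ⟨0, ⟨le_rfl, hγ.nonneg⟩, hγ.source⟩,
    ⟨L, ⟨hγ.nonneg, le_rfl⟩, hγ.target⟩, isPreconnected_Icc.image _ hγ.lip.continuousOn⟩

theorem bdist_le_add_dist (D : Set X) (x y : X) : bdist D x ≤ bdist D y + dist x y :=
  infDist_le_infDist_add_dist

theorem bdist_pos (hD : IsOpen D) (hfr : (frontier D).Nonempty) (hx : x ∈ D) : 0 < bdist D x :=
  (isClosed_frontier.notMem_iff_infDist_pos hfr).1
    (disjoint_right.1 (disjoint_frontier_iff_isOpen.2 hD) hx)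

/-- In a quasiconvex space, nearby points of a domain are joined by a short curve in the domain. -/
theorem QCSpace.exists_curveIn (h : QCSpace c X) (hD : IsOpen D) (hx : x ∈ D)
    (hxy : c * dist x y < bdist D x) : ∃ γ L, CurveIn D γ L x y ∧ L ≤ c * dist x y := by
  obtain ⟨γ, L, hγ, hL⟩ := h x y
  exact ⟨γ, L, hγ.mem_of_lt_bdist hD hx (hL.trans_lt hxy), hL⟩

theorem QCSpace.exists_curveIn_of_isPreconnected (h : QCSpace c X) (hD : IsOpen D)
    (hconn : IsPreconnected D) (hfr : (frontier D).Nonempty) (hx : x ∈ D) (hy : y ∈ D) :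
    ∃ γ L, CurveIn D γ L x y := by
  refine hconn.induction₂' (fun x y => ∃ γ L, CurveIn D γ L x y) (fun x hx => ?_)
    (fun x y z _ _ _ ⟨γ, L, h1⟩ ⟨γ', L', h2⟩ => ⟨_, _, h1.append h2⟩) hx hy
  have hpos := bdist_pos hD hfr hx
  have hcont : Continuous (bdist D) := continuous_infDist_pt _
  have hl : Continuous fun y => c * dist x y := by fun_prop
  have hl' : Continuous fun y => c * dist y x := by fun_prop
  have e1 : ∀ᶠ y in nhds x, c * dist x y < bdist D x :=
    hl.continuousAt.eventually_lt continuousAt_const (by simpa using hpos)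
  have e2 : ∀ᶠ y in nhds x, c * dist y x < bdist D y :=
    hl'.continuousAt.eventually_lt hcont.continuousAt (by simpa using hpos)
  filter_upwards [self_mem_nhdsWithin, mem_nhdsWithin_of_mem_nhds e1,
    mem_nhdsWithin_of_mem_nhds e2] with y hy h1 h2
  obtain ⟨γ, L, h3, -⟩ := h.exists_curveIn hD hx h1
  obtain ⟨γ', L', h4, -⟩ := h.exists_curveIn hD hy h2
  exact ⟨⟨γ, L, h3⟩, ⟨γ', L', h4⟩⟩

theorem CurveIn.continuousOn_one_div_bdist (h : CurveIn D γ L x y) (hD : IsOpen D)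
    (hfr : (frontier D).Nonempty) : ContinuousOn (fun u => 1 / bdist D (γ u)) (Icc 0 L) :=
  continuousOn_const.div ((continuous_infDist_pt _).comp_continuousOn h.lip.continuousOn)
    fun u hu => (bdist_pos hD hfr (h.mem u hu)).ne'

theorem CurveIn.intervalIntegrable_one_div_bdist (h : CurveIn D γ L x y) (hD : IsOpen D)
    (hfr : (frontier D).Nonempty) {s t : ℝ} (hs : 0 ≤ s) (hst : s ≤ t) (ht : t ≤ L) :
    IntervalIntegrable (fun u => 1 / bdist D (γ u)) MeasureTheory.volume s t :=
  ((h.continuousOn_one_div_bdist hD hfr).mono (Icc_subset_Icc hs ht)).intervalIntegrable_of_Icc hst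

theorem CurveIn.qhLength_append {γ' : ℝ → X} {L' : ℝ} (h : CurveIn D γ L x y)
    (h' : CurveIn D γ' L' y z) (hD : IsOpen D) (hfr : (frontier D).Nonempty) :
    qhLength D (fun t => if t ≤ L then γ t else γ' (t - L)) (L + L') =
      qhLength D γ L + qhLength D γ' L' := by
  have hi := h.append h'
  have hL := h.nonneg
  have hL' := h'.nonneg
  rw [qhLength, qhLengthOn, ← intervalIntegral.integral_add_adjacent_intervals
    (hi.intervalIntegrable_one_div_bdist hD hfr le_rfl hL (by linarith))
    (hi.intervalIntegrable_one_div_bdist hD hfr hL (by linarith) le_rfl)]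
  congr 1
  · refine intervalIntegral.integral_congr fun u hu => ?_
    rw [uIcc_of_le hL] at hu
    simp [hu.2]
  · have h1 := intervalIntegral.integral_comp_sub_right (a := L) (b := L + L')
      (fun u => 1 / bdist D (γ' u)) L
    rw [sub_self, add_sub_cancel_left] at h1
    rw [qhLength, qhLengthOn, ← h1]
    refine intervalIntegral.integral_congr fun u hu => ?_
    rw [uIcc_of_le (by linarith)] at hu
    split_ifs with h2
    · have h3 : u = L := le_antisymm h2 hu.1
      rw [h3, sub_self, h.target, h'.source]
    · rfl

theorem CurveIn.qhLength_nonneg (h : CurveIn D γ L x y) : 0 ≤ qhLength D γ L :=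
  intervalIntegral.integral_nonneg h.nonneg fun _ _ => one_div_nonneg.2 infDist_nonneg

theorem CurveIn.qhDist_le (h : CurveIn D γ L x y) : qhDist D x y ≤ qhLength D γ L :=
  csInf_le ⟨0, by rintro _ ⟨γ', L', h', rfl⟩; exact h'.qhLength_nonneg⟩ ⟨γ, L, h, rfl⟩

/-- Points that are close relative to their distance to the boundary are joined by a curve of
quasihyperbolic length at most one. -/
theorem QCSpace.exists_curveIn_qhLength_le_one (h : QCSpace c X) (hD : IsOpen D)
    (hfr : (frontier D).Nonempty) (hx : x ∈ D) (hxy : c * dist x y ≤ bdist D x / 2) :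
    ∃ γ L, CurveIn D γ L x y ∧ qhLength D γ L ≤ 1 := by
  have hpos := bdist_pos hD hfr hx
  obtain ⟨γ, L, hγ, hL⟩ := h.exists_curveIn hD hx (by linarith)
  refine ⟨γ, L, hγ, ?_⟩
  have h1 : qhLength D γ L ≤ ∫ _ in (0 : ℝ)..L, 2 / bdist D x := by
    refine intervalIntegral.integral_mono_on hγ.nonneg
      (hγ.intervalIntegrable_one_div_bdist hD hfr le_rfl hγ.nonneg le_rfl)
      intervalIntegrable_const fun u hu => ?_
    have h2 := hγ.dist_left_le hu
    have h3 := bdist_le_add_dist D x (γ u)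
    rw [div_le_div_iff₀ (bdist_pos hD hfr (hγ.mem u hu)) hpos]
    linarith [hu.2]
  refine h1.trans ?_
  rw [intervalIntegral.integral_const, smul_eq_mul, sub_zero, ← mul_div_assoc, div_le_one hpos]
  linarith

/-- A subcurve of small quasihyperbolic length is short relative to the distance from its
initial point to the boundary. -/
theorem CurveIn.dist_le_of_qhLengthOn_le (h : CurveIn D γ L x y) (hD : IsOpen D)
    (hfr : (frontier D).Nonempty) {s t r : ℝ} (hs : 0 ≤ s) (hst : s ≤ t) (ht : t ≤ L)
    (hr : r ≤ 1 / 2) (hl : qhLengthOn D γ s t ≤ r) :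
    dist (γ s) (γ t) ≤ 2 * r * bdist D (γ s) := by
  have hpos := bdist_pos hD hfr (h.mem s ⟨hs, hst.trans ht⟩)
  have hT : 0 ≤ t - s := sub_nonneg.2 hst
  have h1 : ∫ _ in s..t, 1 / (bdist D (γ s) + (t - s)) ≤ qhLengthOn D γ s t := by
    refine intervalIntegral.integral_mono_on hst intervalIntegrable_const
      (h.intervalIntegrable_one_div_bdist hD hfr hs hst ht) fun u hu => ?_
    have h2 := h.dist_le hs hu.1 (hu.2.trans ht)
    have h3 := bdist_le_add_dist D (γ u) (γ s)
    rw [dist_comm] at h3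
    refine one_div_le_one_div_of_le
      (bdist_pos hD hfr (h.mem u ⟨hs.trans hu.1, hu.2.trans ht⟩)) ?_
    linarith [hu.2]
  rw [intervalIntegral.integral_const, smul_eq_mul, mul_one_div] at h1
  have h4 := (div_le_iff₀ (by linarith)).1 (h1.trans hl)
  have h5 := h.dist_le hs hst ht
  nlinarith

end Curves

section WeakQuasisymmetry

/-- `f` is weakly `H`-quasisymmetric on the set `D`. -/
def WeakQSOn {X Y : Type*} [MetricSpace X] [MetricSpace Y] (H : ℝ) (f : X → Y) (D : Set X) :
    Prop :=
  ∀ x ∈ D, ∀ a ∈ D, ∀ b ∈ D, dist x a ≤ dist x b → dist (f x) (f a) ≤ H * dist (f x) (f b)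

/-- The distortion of a weakly `H`-quasisymmetric map along a chain of `n` steps. -/
def chainConst (H : ℝ) : ℕ → ℝ
  | 0 => 0
  | n + 1 => H * (1 + chainConst H n)

theorem chainConst_nonneg {H : ℝ} (hH : 0 ≤ H) (n : ℕ) : 0 ≤ chainConst H n := by
  induction n with
  | zero => exact le_rfl
  | succ n ih => exact mul_nonneg hH (by linarith)

/-- `f` and `g` are mutually inverse homeomorphisms between `D` and `D'`, both weakly
`H`-quasisymmetric. -/
structure WeakQSPair {X Y : Type*} [MetricSpace X] [MetricSpace Y] (H : ℝ) (f : X → Y) (g : Y → X)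
    (D : Set X) (D' : Set Y) : Prop where
  mapsTo : MapsTo f D D'
  mapsTo_symm : MapsTo g D' D
  leftInv : ∀ x ∈ D, g (f x) = x
  rightInv : ∀ y ∈ D', f (g y) = y
  continuousOn : ContinuousOn f D
  continuousOn_symm : ContinuousOn g D'
  weakQSOn : WeakQSOn H f D
  weakQSOn_symm : WeakQSOn H g D'

variable {X Y : Type*} [MetricSpace X] [MetricSpace Y] {c H : ℝ} {f : X → Y} {g : Y → X}
  {D : Set X} {D' : Set Y}

theorem WeakQSPair.symm (h : WeakQSPair H f g D D') : WeakQSPair H g f D' D :=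
  ⟨h.mapsTo_symm, h.mapsTo, h.rightInv, h.leftInv, h.continuousOn_symm, h.continuousOn,
    h.weakQSOn_symm, h.weakQSOn⟩

/-- A weakly quasisymmetric map distorts distances in a controlled way along a curve of length at
most `n * s`, once it is controlled at the scale `s` at the initial point. -/
theorem WeakQSOn.dist_le_chainConst_mul (hf : WeakQSOn H f D) (hH : 0 ≤ H) {s : ℝ} (hs : 0 < s)
    (n : ℕ) : ∀ {γ : ℝ → X} {L : ℝ} {p e a : X}, CurveIn D γ L p e → L ≤ n * s → a ∈ D →
      s ≤ dist p a → dist (f p) (f e) ≤ chainConst H n * dist (f p) (f a) := by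
  induction n with
  | zero =>
    intro γ L p e a hγ hL _ _
    have hL0 : L = 0 := le_antisymm (by simpa using hL) hγ.nonneg
    have : p = e := by rw [← hγ.source, ← hγ.target, hL0]
    simp [this, chainConst]
  | succ n ih =>
    intro γ L p e a hγ hL ha hpa
    have hL0 := hγ.nonneg
    have hp : p ∈ D := hγ.source ▸ hγ.mem 0 ⟨le_rfl, hL0⟩
    have he : e ∈ D := hγ.target ▸ hγ.mem L ⟨hL0, le_rfl⟩
    have hC := chainConst_nonneg hH n
    have hd : 0 ≤ dist (f p) (f a) := dist_nonneg
    simp only [chainConst]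
    rcases le_total (dist p e) s with hpe | hpe
    · have h1 := hf p hp e he a ha (hpe.trans hpa)
      have h2 : 0 ≤ H * chainConst H n * dist (f p) (f a) := by positivity
      linarith
    · have hcont : ContinuousOn (fun t => dist p (γ t)) (Icc 0 L) :=
        (continuous_const.dist continuous_id).comp_continuousOn hγ.lip.continuousOn
      obtain ⟨τ, hτ, hτs⟩ := intermediate_value_Icc hL0 hcont
        ⟨by simpa [hγ.source] using hs.le, by simpa [hγ.target] using hpe⟩
      dsimp only at hτs
      have hsτ : s ≤ τ := hτs ▸ hγ.dist_left_le hτ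
      have hq := hγ.mem τ hτ
      have h1 := hf p hp _ hq a ha (hτs.trans_le hpa)
      have h2 := ih (hγ.restrict hτ.1 hτ.2 le_rfl
        fun u hu => hγ.mem u ⟨hτ.1.trans hu.1, hu.2⟩) (by push_cast at hL; linarith) hp
        (by rw [dist_comm, hτs])
      rw [hγ.target, dist_comm (f (γ τ)) (f p)] at h2
      have h3 := mul_le_mul_of_nonneg_left h1 hC
      linarith [dist_triangle (f p) (f (γ τ)) (f e)]

/-- Points of `D` whose images approach a point outside the image of `D` stay away from any given
point of `D`, quantitatively. -/
theorem WeakQSOn.exists_bdist_le_of_notMem_image [CompleteSpace X] (hf : WeakQSOn H f D)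
    (hH : 0 ≤ H) (hc : 1 ≤ c) (hX : QCSpace c X) (hD : IsOpen D) (hfr : (frontier D).Nonempty)
    (hfc : ContinuousOn f D) {w : Y} (hw : w ∉ f '' D) {x : X} (hx : x ∈ D) :
    ∃ ε > 0, ∀ z ∈ D, dist (f z) w < ε → bdist D x / (2 * c) ≤ dist x z := by
  by_contra! hcon
  have hpos := bdist_pos hD hfr hx
  choose z hzD hzw hzx using fun n : ℕ => hcon (1 / ((n : ℝ) + 1)) Nat.one_div_pos_of_nat
  have hlim : Tendsto (fun n => f (z n)) atTop (nhds w) :=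
    tendsto_iff_dist_tendsto_zero.2 (squeeze_zero (fun _ => dist_nonneg) (fun n => (hzw n).le)
      tendsto_one_div_add_atTop_nhds_zero_nat)
  have hzx' : ∀ n, c * dist x (z n) ≤ bdist D x / 2 := fun n => by
    have := hzx n
    rw [lt_div_iff₀ (by linarith)] at this
    linarith
  have hcauchy : CauchySeq z := by
    by_contra hnc
    rw [Metric.cauchySeq_iff] at hnc
    push Not at hnc
    obtain ⟨ε, hε, hbad⟩ := hnc
    set N := ⌈bdist D x / 2 / ε⌉₊
    have hN : bdist D x / 2 ≤ N * ε := (div_le_iff₀ hε).1 (Nat.le_ceil _)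
    have hC := chainConst_nonneg hH N
    refine hw ⟨x, hx, eq_of_forall_dist_le fun η hη => ?_⟩
    set η' := η / (2 * chainConst H N + 1)
    have hη' : 0 < η' := by positivity
    have hηη : η' * (2 * chainConst H N + 1) = η := div_mul_cancel₀ _ (by positivity)
    obtain ⟨n₀, hn₀⟩ := Metric.tendsto_atTop.1 hlim η' hη'
    obtain ⟨m, hm, n, hn, hmn⟩ := hbad n₀
    have hm1 := hzx' m
    have hdm : c * dist (z m) x < bdist D (z m) := by
      have h1 := bdist_le_add_dist D x (z m)
      have h2 := hzx m
      have h3 : bdist D x / (2 * c) ≤ bdist D x / 2 :=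
        div_le_div_of_nonneg_left hpos.le two_pos (by linarith)
      rw [dist_comm]
      linarith
    obtain ⟨γ, L, hγ, hL⟩ := hX.exists_curveIn hD (hzD m) hdm
    rw [dist_comm] at hL
    have h1 := hf.dist_le_chainConst_mul hH hε N hγ (hL.trans (hm1.trans hN)) (hzD n) hmn
    have h2 : dist (f (z m)) (f (z n)) ≤ 2 * η' := by
      have := dist_triangle_right (f (z m)) (f (z n)) w
      linarith [hn₀ m hm, hn₀ n hn]
    have h3 := mul_le_mul_of_nonneg_left h2 hC
    have h4 := dist_triangle_left (f x) w (f (z m))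
    linarith [hn₀ m hm]
  obtain ⟨v, hv⟩ := cauchySeq_tendsto_of_complete hcauchy
  have hxv : c * dist x v ≤ bdist D x / 2 :=
    le_of_tendsto' ((tendsto_const_nhds.dist hv).const_mul c) hzx'
  obtain ⟨γ, L, hγ, -⟩ := hX.exists_curveIn hD hx (by linarith : c * dist x v < bdist D x)
  have hvD : v ∈ D := hγ.target ▸ hγ.mem L ⟨hγ.nonneg, le_rfl⟩
  exact hw ⟨v, hvD, tendsto_nhds_unique ((hfc.continuousAt (hD.mem_nhds hvD)).tendsto.comp hv) hlim⟩

/-- The relative scale, depending only on `c` and `H`, at which a weakly `H`-quasisymmetric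
homeomorphism has small relative oscillation. -/
noncomputable def relScale (c H : ℝ) : ℝ := 1 / (4 * c * (chainConst H ⌈4 * c ^ 2⌉₊ + 1))

theorem relScale_pos (hc : 1 ≤ c) (hH : 0 ≤ H) : 0 < relScale c H := by
  have := chainConst_nonneg hH ⌈4 * c ^ 2⌉₊
  unfold relScale
  positivity

theorem relScale_le_one (hc : 1 ≤ c) (hH : 0 ≤ H) : relScale c H ≤ 1 := by
  have := chainConst_nonneg hH ⌈4 * c ^ 2⌉₊
  unfold relScale
  rw [div_le_one (by positivity)]
  nlinarith

theorem WeakQSPair.dist_le_bdist [CompleteSpace X] (h : WeakQSPair H f g D D') (hH : 0 ≤ H)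
    (hc : 1 ≤ c) (hX : QCSpace c X) (hY : QCSpace c Y) (hD : IsOpen D)
    (hfr : (frontier D).Nonempty) (hD' : IsOpen D') (hfr' : (frontier D').Nonempty) {x y : X}
    (hx : x ∈ D) (hy : y ∈ D) (hxy : dist x y ≤ relScale c H * bdist D x) :
    c * dist (f x) (f y) ≤ bdist D' (f x) / 2 := by
  by_contra! hcon
  have hx' := h.mapsTo hx
  have hy' := h.mapsTo hy
  have hpos := bdist_pos hD hfr hx
  have hpos' := bdist_pos hD' hfr' hx'
  obtain ⟨w₀, hw₀, hdw₀⟩ := (infDist_lt_iff hfr').1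
    (show infDist (f x) (frontier D') < 2 * bdist D' (f x) by unfold bdist at hpos' ⊢; linarith)
  obtain ⟨σ, L, hσ, hL⟩ := hY (f x) w₀
  have hw₀D : σ L ∉ D' := by
    rw [hσ.target]
    exact fun hmem => disjoint_right.1 (disjoint_frontier_iff_isOpen.2 hD') hmem hw₀
  obtain ⟨τ, hτ0, hτL, hτ, hlt⟩ := hσ.exists_first_exit hD' hx' ⟨hσ.nonneg, le_rfl⟩ hw₀D
  have hnot : σ τ ∉ f '' D := fun ⟨z, hz, hfz⟩ => hτ (hfz ▸ h.mapsTo hz)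
  obtain ⟨ε, hε, hesc⟩ :=
    h.weakQSOn.exists_bdist_le_of_notMem_image hH hc hX hD hfr h.continuousOn hnot hx
  set t := max 0 (τ - ε / 2)
  have ht0 : 0 ≤ t := le_max_left _ _
  have htτ : t < τ := max_lt hτ0 (by linarith)
  have htε : τ - ε / 2 ≤ t := le_max_right _ _
  have htD := hlt t ⟨ht0, htτ⟩
  have hfar := hesc (g (σ t)) (h.mapsTo_symm htD) (by
    rw [h.rightInv _ htD]
    linarith [hσ.dist_le ht0 htτ.le hτL])
  have hσt := hσ.restrict (E := D') le_rfl ht0 (htτ.le.trans hτL)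
    fun u hu => hlt u ⟨hu.1, hu.2.trans_lt htτ⟩
  rw [hσ.source] at hσt
  have hs : 0 < bdist D' (f x) / (2 * c) := by positivity
  have hlen : t - 0 ≤ ⌈4 * c ^ 2⌉₊ * (bdist D' (f x) / (2 * c)) := by
    have h1 : t - 0 ≤ 4 * c ^ 2 * (bdist D' (f x) / (2 * c)) := by
      have h2 : 4 * c ^ 2 * (bdist D' (f x) / (2 * c)) = c * (2 * bdist D' (f x)) := by
        field_simp
        ring
      have h3 := mul_le_mul_of_nonneg_left hdw₀.le (by linarith : (0 : ℝ) ≤ c)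
      linarith
    exact h1.trans (mul_le_mul_of_nonneg_right (Nat.le_ceil _) hs.le)
  have hchain := h.weakQSOn_symm.dist_le_chainConst_mul hH hs _ hσt hlen hy' (by
    rw [div_le_iff₀ (by linarith)]
    linarith)
  rw [h.leftInv x hx, h.leftInv y hy] at hchain
  have hA := chainConst_nonneg hH ⌈4 * c ^ 2⌉₊
  have hle := (hfar.trans hchain).trans (mul_le_mul_of_nonneg_left hxy hA)
  have hc0 : 0 < c := by linarith
  unfold relScale at hle
  rw [div_le_iff₀ (by positivity)] at hle
  field_simp at hle
  nlinarith

/-- A curve in `D` is shadowed by a curve in `D'` of controlled quasihyperbolic length. -/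
theorem WeakQSPair.exists_curveIn_qhLength_le [CompleteSpace X] (h : WeakQSPair H f g D D')
    (hH : 0 ≤ H) (hc : 1 ≤ c) (hX : QCSpace c X) (hY : QCSpace c Y) (hD : IsOpen D)
    (hfr : (frontier D).Nonempty) (hD' : IsOpen D') (hfr' : (frontier D').Nonempty) {γ : ℝ → X}
    {L : ℝ} {x y : X} (hγ : CurveIn D γ L x y) (n : ℕ) : ∀ s ∈ Icc 0 L,
      qhLengthOn D γ s L ≤ (n + 1) * (relScale c H / 2) →
      ∃ γ' L', CurveIn D' γ' L' (f (γ s)) (f (γ L)) ∧ qhLength D' γ' L' ≤ n + 1 := by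
  have hr0 := relScale_pos hc hH
  have hr1 := relScale_le_one hc hH
  have hstep : ∀ s t, 0 ≤ s → s ≤ t → t ≤ L → qhLengthOn D γ s t ≤ relScale c H / 2 →
      ∃ γ' L', CurveIn D' γ' L' (f (γ s)) (f (γ t)) ∧ qhLength D' γ' L' ≤ 1 := by
    intro s t hs hst ht hl
    have hsD := hγ.mem s ⟨hs, hst.trans ht⟩
    have h1 := hγ.dist_le_of_qhLengthOn_le hD hfr hs hst ht (by linarith) hl
    exact hY.exists_curveIn_qhLength_le_one hD' hfr' (h.mapsTo hsD)
      (h.dist_le_bdist hH hc hX hY hD hfr hD' hfr' hsD (hγ.mem t ⟨hs.trans hst, ht⟩)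
        (by linarith))
  induction n with
  | zero =>
    intro s hs hl
    simpa using hstep s L hs.1 hs.2 le_rfl (by simpa using hl)
  | succ n ih =>
    intro s hs hl
    rcases le_total (qhLengthOn D γ s L) (relScale c H / 2) with hle | hge
    · obtain ⟨γ', L', h1, h2⟩ := hstep s L hs.1 hs.2 le_rfl hle
      exact ⟨γ', L', h1, h2.trans (by push_cast; linarith [n.cast_nonneg (α := ℝ)])⟩
    · have hint : ∀ a b, 0 ≤ a → a ≤ b → b ≤ L →
          IntervalIntegrable (fun u => 1 / bdist D (γ u)) MeasureTheory.volume a b :=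
        fun a b => hγ.intervalIntegrable_one_div_bdist hD hfr
      have hcont : ContinuousOn (qhLengthOn D γ s) (Icc s L) := by
        have := intervalIntegral.continuousOn_primitive_interval' (hint s L hs.1 hs.2 le_rfl)
          left_mem_uIcc
        rwa [uIcc_of_le hs.2] at this
      obtain ⟨t, ht, hlt⟩ := intermediate_value_Icc hs.2 hcont
        ⟨by simpa [qhLengthOn] using (half_pos hr0).le, hge⟩
      have hadd : qhLengthOn D γ s t + qhLengthOn D γ t L = qhLengthOn D γ s L :=
        intervalIntegral.integral_add_adjacent_intervals (hint s t hs.1 ht.1 ht.2)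
          (hint t L (hs.1.trans ht.1) ht.2 le_rfl)
      obtain ⟨γ₁, L₁, h1, hl1⟩ := hstep s t hs.1 ht.1 ht.2 hlt.le
      obtain ⟨γ₂, L₂, h2, hl2⟩ := ih t ⟨hs.1.trans ht.1, ht.2⟩ (by push_cast at hl; linarith)
      refine ⟨_, _, h1.append h2, ?_⟩
      rw [h1.qhLength_append h2 hD' hfr']
      push_cast
      linarith

/-- The quasihyperbolic metric is coarsely Lipschitz under weakly quasisymmetric
homeomorphisms. -/
theorem WeakQSPair.qhDist_le [CompleteSpace X] (h : WeakQSPair H f g D D')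
    (hH : 0 ≤ H) (hc : 1 ≤ c) (hX : QCSpace c X) (hY : QCSpace c Y) (hD : IsOpen D)
    (hconn : IsPreconnected D) (hfr : (frontier D).Nonempty) (hD' : IsOpen D')
    (hfr' : (frontier D').Nonempty) {x y : X} (hx : x ∈ D) (hy : y ∈ D) :
    qhDist D' (f x) (f y) ≤ 2 / relScale c H * qhDist D x y + 1 := by
  have hr0 := relScale_pos hc hH
  suffices hs : (qhDist D' (f x) (f y) - 1) * (relScale c H / 2) ≤ qhDist D x y by
    rw [← le_div_iff₀ (by positivity)] at hs
    calc _ ≤ qhDist D x y / (relScale c H / 2) + 1 := by linarith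
      _ = _ := by field_simp
  obtain ⟨γ₀, L₀, h₀⟩ := hX.exists_curveIn_of_isPreconnected hD hconn hfr hx hy
  refine le_csInf ⟨_, γ₀, L₀, h₀, rfl⟩ ?_
  rintro _ ⟨γ, L, hγ, rfl⟩
  set n := ⌊qhLength D γ L / (relScale c H / 2)⌋₊
  have hn := Nat.lt_floor_add_one (qhLength D γ L / (relScale c H / 2))
  have hn' : (n : ℝ) ≤ qhLength D γ L / (relScale c H / 2) :=
    Nat.floor_le (div_nonneg hγ.qhLength_nonneg (by positivity))
  obtain ⟨γ', L', hγ', hl⟩ := h.exists_curveIn_qhLength_le hH hc hX hY hD hfr hD' hfr' hγ n 0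
    ⟨le_rfl, hγ.nonneg⟩ ((div_le_iff₀ (by positivity)).1 hn.le)
  rw [hγ.source, hγ.target] at hγ'
  rw [← le_div_iff₀ (by positivity)]
  linarith [hγ'.qhDist_le]

end WeakQuasisymmetry

section Restriction

variable {X Y : Type*} [MetricSpace X] [MetricSpace Y] {H : ℝ} {G D : Set X} {G' : Set Y}

theorem mem_imSet {f : ↥G ≃ₜ ↥G'} {x : X} (hG : x ∈ G) (hx : x ∈ D) :
    (f ⟨x, hG⟩ : Y) ∈ imSet f D :=
  ⟨_, ⟨⟨x, hG⟩, hx, rfl⟩, rfl⟩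

theorem imSet_subset (f : ↥G ≃ₜ ↥G') (D : Set X) : imSet f D ⊆ G' := by
  rintro _ ⟨z, -, rfl⟩
  exact z.2

theorem isOpen_imSet (f : ↥G ≃ₜ ↥G') (hG' : IsOpen G') (hD : IsOpen D) : IsOpen (imSet f D) :=
  hG'.isOpenMap_subtype_val _ (f.isOpenMap _ (hD.preimage continuous_subtype_val))

theorem isPreconnected_imSet (f : ↥G ≃ₜ ↥G') (hDG : D ⊆ G) (hD : IsPreconnected D) :
    IsPreconnected (imSet f D) := by
  have h : IsPreconnected (Subtype.val ⁻¹' D : Set G) := by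
    rw [← Topology.IsInducing.subtypeVal.isPreconnected_image, Subtype.image_preimage_coe,
      inter_eq_self_of_subset_right hDG]
    exact hD
  exact (h.image _ f.continuous.continuousOn).image _ continuous_subtype_val.continuousOn

/-- A homeomorphism that is weakly quasisymmetric in both directions restricts to such a pair of
maps on every subset. -/
theorem exists_weakQSPair (f : ↥G ≃ₜ ↥G') (hf : WeakQS H f) (hf' : WeakQS H f.symm)
    (hDG : D ⊆ G) (hne : D.Nonempty) :
    ∃ (F : X → Y) (g : Y → X), WeakQSPair H F g D (imSet f D) ∧
      ∀ x (hx : x ∈ G), F x = f ⟨x, hx⟩ := by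
  classical
  obtain ⟨x₀, hx₀⟩ := hne
  let F : X → Y := fun x => if hx : x ∈ G then f ⟨x, hx⟩ else f ⟨x₀, hDG hx₀⟩
  let g : Y → X := fun y => if hy : y ∈ G' then f.symm ⟨y, hy⟩ else x₀
  have hF : ∀ x (hx : x ∈ G), F x = f ⟨x, hx⟩ := fun x hx => dif_pos hx
  have hg : ∀ y (hy : y ∈ G'), g y = f.symm ⟨y, hy⟩ := fun y hy => dif_pos hy
  have hsub := imSet_subset f D
  have hgF : ∀ z : G, g (f z) = z := fun z => by simp [hg _ (f z).2]
  refine ⟨F, g, ⟨fun x hx => hF x (hDG hx) ▸ mem_imSet _ hx, ?_, fun x hx => ?_, fun y hy => ?_,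
    ?_, ?_, ?_, ?_⟩, hF⟩
  · rintro _ ⟨_, ⟨z, hz, rfl⟩, rfl⟩
    rw [hgF]
    exact hz
  · rw [hF x (hDG hx), hgF]
  · rw [hg y (hsub hy), hF _ (Subtype.prop _)]
    simp
  · rw [continuousOn_iff_continuous_domRestrict]
    have : D.domRestrict F = fun z : D => (f ⟨z, hDG z.2⟩ : Y) :=
      funext fun z : D => hF z (hDG z.2)
    rw [this]
    fun_prop
  · rw [continuousOn_iff_continuous_domRestrict]
    have : (imSet f D).domRestrict g = fun z : imSet f D => (f.symm ⟨z, hsub z.2⟩ : X) :=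
      funext fun z : imSet f D => hg z (hsub z.2)
    rw [this]
    fun_prop
  · intro x hx a ha b hb hab
    rw [hF x (hDG hx), hF a (hDG ha), hF b (hDG hb)]
    exact hf ⟨x, hDG hx⟩ ⟨a, hDG ha⟩ ⟨b, hDG hb⟩ hab
  · intro x hx a ha b hb hab
    rw [hg x (hsub hx), hg a (hsub ha), hg b (hsub hb)]
    exact hf' ⟨x, hsub hx⟩ ⟨a, hsub ha⟩ ⟨b, hsub hb⟩ hab

theorem QCSpace.frontier_nonempty {c : ℝ} (hX : QCSpace c X) (hne : D.Nonempty) (hDG : D ⊆ G)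
    (hG : G ≠ univ) : (frontier D).Nonempty :=
  have := hX.preconnectedSpace
  nonempty_frontier_iff.2 ⟨hne, fun h => hG (univ_subset_iff.1 (h ▸ hDG))⟩

end Restriction

/-- Lemma 7(2): If `X, Y` are `c`-quasiconvex complete metric
spaces, `G ⊊ X`, `G' ⊊ Y` domains and both `f : G → G'` and `f⁻¹` are weakly
`H`-quasisymmetric, then `f` is fully `(M,C)`-CQH with `M = M(c,H) ≥ 1`,
`C = C(c,H) ≥ 0`: for every subdomain `D ⊆ G` and all `x, y ∈ D`,
`(k_D(x,y) − C)/M ≤ k_{f(D)}(f(x),f(y)) ≤ M·k_D(x,y) + C`. -/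
theorem stmt13 (c H : ℝ) (hc : 1 ≤ c) (hH : 1 ≤ H) :
    ∃ M C : ℝ, 1 ≤ M ∧ 0 ≤ C ∧
      ∀ (X Y : Type) [MetricSpace X] [MetricSpace Y]
        [CompleteSpace X] [CompleteSpace Y], QCSpace c X → QCSpace c Y →
        ∀ (G : Set X) (G' : Set Y), IsProperDomain G → IsProperDomain G' →
          ∀ f : ↥G ≃ₜ ↥G', WeakQS H (⇑f) → WeakQS H (⇑f.symm) →
            ∀ D : Set X, ∀ hD : D ⊆ G, IsDomainSet D →
              ∀ x : X, ∀ hx : x ∈ D, ∀ y : X, ∀ hy : y ∈ D,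
                (qhDist D x y - C) / M ≤
                    qhDist (imSet f D) ↑(f ⟨x, hD hx⟩) ↑(f ⟨y, hD hy⟩) ∧
                  qhDist (imSet f D) ↑(f ⟨x, hD hx⟩) ↑(f ⟨y, hD hy⟩) ≤
                    M * qhDist D x y + C := by
  have hH0 : 0 ≤ H := by linarith
  have hr0 := relScale_pos hc hH0
  refine ⟨2 / relScale c H, 1, ?_, zero_le_one, ?_⟩
  · rw [le_div_iff₀ hr0]
    linarith [relScale_le_one hc hH0]
  intro X Y _ _ _ _ hX hY G G' hG hG' f hf hf' D hD hdom x hx y hy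
  obtain ⟨F, g, hp, hF⟩ := exists_weakQSPair f hf hf' hD hdom.2.nonempty
  have hfr := hX.frontier_nonempty hdom.2.nonempty hD hG.2.2
  have hfr' := hY.frontier_nonempty ⟨_, mem_imSet (f := f) (hD hx) hx⟩ (imSet_subset f D) hG'.2.2
  have hop := isOpen_imSet f hG'.1 hdom.1
  have hconn := isPreconnected_imSet f hD hdom.2.isPreconnected
  have h1 := hp.qhDist_le hH0 hc hX hY hdom.1 hdom.2.isPreconnected hfr hop hfr' hx hy
  have h2 := hp.symm.qhDist_le hH0 hc hY hX hop hconn hfr' hdom.1 hfr (hp.mapsTo hx) (hp.mapsTo hy)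
  rw [hp.leftInv x hx, hp.leftInv y hy] at h2
  rw [hF x (hD hx), hF y (hD hy)] at h1 h2
  refine ⟨?_, h1⟩
  rw [div_le_iff₀ (by positivity)]
  linarith
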